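/- Pointwise continuous extension of boundary data: let Ω ⊂ ℝ^N be open bounded with Lipschitz boundary, g ∈ L¹(∂Ω), and suppose g is continuous at x₀ ∈ ∂Ω. Then there exists ψ ∈ BV(ℝ^N ∖ Ω̄) with trace g on ∂Ω such that lim_{r→0} ess sup_{y ∈ B(x₀,r)∖Ω̄} |ψ(y) − g(x₀)| = 0. -/

import Mathlib

/-!
Let `u` be an extension of `g` as in Gagliardo's theorem, and write `a = g x₀`. Near `x₀`, truncate
`u` to the interval `[a - h, a + h]`, where `h ≥ 0` is a continuous function of finite variation
with `h x₀ = 0` and `|g - a| ≤ h` on the boundary near `x₀`. Truncation does not increase the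
variation beyond the sum of those of `u` and `h`, it does not change the trace because
`a - h ≤ g ≤ a + h`, and the truncated function tends to `a` at `x₀` because `h` does. The barrier
`h` is a series `∑ₙ 2⁻ⁿ (1 - bₙ)` of bumps `bₙ` around `x₀` whose radii are adapted to the modulus
of continuity of `g`; it replaces an iteration of truncations at the levels `a ± 2⁻ⁿ` on shrinking
balls. It has finite variation because rescaled bumps in `ℝᴺ` have variation at most proportional
to `r ^ (N - 1)`.
-/

open Set MeasureTheory Filter Topology
open scoped ENNReal

/-- The divergence of a vector field on `ℝᴺ`. -/
noncomputable def divN {N : ℕ} (w : EuclideanSpace ℝ (Fin N) → EuclideanSpace ℝ (Fin N))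
    (x : EuclideanSpace ℝ (Fin N)) : ℝ :=
  ∑ i : Fin N, fderiv ℝ w x (EuclideanSpace.single i 1) i

/-- The total variation of `ψ` over the open set `U`, via the sup formula. -/
noncomputable def TVsup {N : ℕ} (ψ : EuclideanSpace ℝ (Fin N) → ℝ)
    (U : Set (EuclideanSpace ℝ (Fin N))) : ℝ≥0∞ :=
  ⨆ w : {w : EuclideanSpace ℝ (Fin N) → EuclideanSpace ℝ (Fin N) //
      ContDiff ℝ 1 w ∧ HasCompactSupport w ∧ tsupport w ⊆ U ∧ ∀ x, ‖w x‖ ≤ 1},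
    ENNReal.ofReal (∫ x in U, ψ x * divN w.1 x)

/-- `ψ`, defined on the open set `U`, has BV boundary trace `g` on `∂U` with
respect to the surface measure `σ` (averaged a.e. characterization). -/
def HasTraceOn {N : ℕ} (ψ : EuclideanSpace ℝ (Fin N) → ℝ)
    (U : Set (EuclideanSpace ℝ (Fin N))) (g : EuclideanSpace ℝ (Fin N) → ℝ)
    (σ : Measure (EuclideanSpace ℝ (Fin N))) : Prop :=
  ∀ᵐ x ∂σ, Tendsto
    (fun r => (∫ y in Metric.ball x r ∩ U, |ψ y - g x|) /
      (volume (Metric.ball x r ∩ U)).toReal) (nhdsWithin 0 (Ioi 0)) (nhds 0)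

section

open scoped Convolution

variable {N : ℕ}

local notation:max "ℝ^" N:max => EuclideanSpace ℝ (Fin N)

section Divergence

variable {f : ℝ^N → ℝ} {w : ℝ^N → ℝ^N} {x : ℝ^N}

theorem continuous_divN (hw : ContDiff ℝ 1 w) : Continuous (divN w) := by
  have := hw.continuous_fderiv one_ne_zero
  unfold divN
  fun_prop

theorem divN_eq_zero_of_notMem_tsupport (hx : x ∉ tsupport w) : divN w x = 0 := by
  have : fderiv ℝ w x = 0 :=
    Function.notMem_support.1 fun h => hx (support_fderiv_subset ℝ h)
  simp [divN, this]

theorem hasCompactSupport_divN (hw : HasCompactSupport w) : HasCompactSupport (divN w) :=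
  .intro hw fun _ => divN_eq_zero_of_notMem_tsupport

theorem divN_comp_add_right (w : ℝ^N → ℝ^N) (t x : ℝ^N) :
    divN (fun y => w (y + t)) x = divN w (x + t) := by
  simp only [divN, fderiv_comp_add_right]

theorem divN_smul (hf : DifferentiableAt ℝ f x) (hw : DifferentiableAt ℝ w x) :
    divN (fun y => f y • w y) x = f x * divN w x + fderiv ℝ f x (w x) := by
  have hsum : fderiv ℝ f x (w x) = ∑ i, fderiv ℝ f x (EuclideanSpace.single i 1) * w x i := by
    conv_lhs => rw [← (EuclideanSpace.basisFun (Fin N) ℝ).sum_repr (w x)]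
    simp [mul_comm]
  simp only [divN, fderiv_fun_smul hf hw, hsum, Finset.mul_sum, ← Finset.sum_add_distrib]
  simp

theorem divN_eq_sum_fderiv_apply (hw : DifferentiableAt ℝ w x) :
    divN w x = ∑ i, fderiv ℝ (fun y => w y i) x (EuclideanSpace.single i 1) := by
  refine Finset.sum_congr rfl fun i _ => ?_
  have hcoord : HasFDerivAt (fun y => w y i) ((EuclideanSpace.proj i).comp (fderiv ℝ w x)) x :=
    (EuclideanSpace.proj i : ℝ^N →L[ℝ] ℝ).hasFDerivAt.comp x hw.hasFDerivAt
  rw [hcoord.fderiv]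
  rfl

theorem integral_divN_eq_zero (hw : ContDiff ℝ 1 w) (hwc : HasCompactSupport w) :
    ∫ x, divN w x = 0 := by
  have hsmooth (i : Fin N) : ContDiff ℝ 1 fun y => w y i := by fun_prop
  have hsupp (i : Fin N) : HasCompactSupport fun y => w y i :=
    hwc.comp_left (g := fun v : ℝ^N => v i) rfl
  have hint (i : Fin N) :
      Integrable fun x => fderiv ℝ (fun y => w y i) x (EuclideanSpace.single i 1) :=
    (((hsmooth i).continuous_fderiv one_ne_zero).clm_apply
      continuous_const).integrable_of_hasCompactSupport ((hsupp i).fderiv_apply ℝ _)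
  simp_rw [fun x => divN_eq_sum_fderiv_apply (hw.differentiable one_ne_zero x)]
  rw [integral_finsetSum _ fun i _ => hint i]
  refine Finset.sum_eq_zero fun i _ => ?_
  simpa using integral_mul_fderiv_eq_neg_fderiv_mul_of_integrable
    (μ := (volume : Measure ℝ^N)) (f := fun _ => (1 : ℝ)) (g := fun y => w y i)
    (v := EuclideanSpace.single i 1) (by simp) (by simpa using hint i)
    (by simpa using (hsmooth i).continuous.integrable_of_hasCompactSupport (hsupp i))
    (by simp) (fun x _ => (hsmooth i).differentiable one_ne_zero x)

theorem integral_mul_divN_eq_neg_integral_fderiv (hf : ContDiff ℝ 1 f) (hw : ContDiff ℝ 1 w)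
    (hwc : HasCompactSupport w) : ∫ x, f x * divN w x = -∫ x, fderiv ℝ f x (w x) := by
  have hint_mul : Integrable fun x => f x * divN w x :=
    (hf.continuous.mul (continuous_divN hw)).integrable_of_hasCompactSupport
      (hasCompactSupport_divN hwc).mul_left
  have hint_fderiv : Integrable fun x => fderiv ℝ f x (w x) :=
    ((hf.continuous_fderiv one_ne_zero).clm_apply hw.continuous).integrable_of_hasCompactSupport
      (.intro hwc fun x hx => by rw [image_eq_zero_of_notMem_tsupport hx, map_zero])
  have hzero : ∫ x, divN (fun y => f y • w y) x = 0 :=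
    integral_divN_eq_zero (hf.smul hw) (hwc.smul_left (f := f))
  simp_rw [divN_smul (hf.differentiable one_ne_zero _) (hw.differentiable one_ne_zero _)] at hzero
  rw [integral_add hint_mul hint_fderiv] at hzero
  exact eq_neg_of_add_eq_zero_left hzero

end Divergence

section TestField

variable {U V : Set ℝ^N} {f u : ℝ^N → ℝ} {w : ℝ^N → ℝ^N} {C : ℝ≥0∞}

/-- The vector fields against which `TVsup` tests: `C¹`, compactly supported in `U`, and bounded
by one in the Euclidean norm. -/
structure IsTestField (U : Set ℝ^N) (w : ℝ^N → ℝ^N) : Prop where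
  contDiff : ContDiff ℝ 1 w
  hasCompactSupport : HasCompactSupport w
  tsupport_subset : tsupport w ⊆ U
  norm_le_one : ∀ x, ‖w x‖ ≤ 1

namespace IsTestField

theorem mono (hw : IsTestField U w) (h : tsupport w ⊆ V) : IsTestField V w :=
  { hw with tsupport_subset := h }

theorem smul (hw : IsTestField U w) (hf : ContDiff ℝ 1 f) (hf1 : ∀ x, |f x| ≤ 1) :
    IsTestField U fun x => f x • w x where
  contDiff := hf.smul hw.contDiff
  hasCompactSupport := hw.hasCompactSupport.smul_left (f := f)
  tsupport_subset := (tsupport_smul_subset_right f w).trans hw.tsupport_subset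
  norm_le_one x := by
    rw [norm_smul]
    exact mul_le_one₀ (hf1 x) (norm_nonneg _) (hw.norm_le_one x)

theorem comp_add_right (hw : IsTestField U w) {t : ℝ^N} (h : ∀ y, y + t ∈ U → y ∈ V) :
    IsTestField V fun y => w (y + t) where
  contDiff := hw.contDiff.comp (by fun_prop)
  hasCompactSupport := hw.hasCompactSupport.comp_homeomorph (Homeomorph.addRight t)
  tsupport_subset y hy := h y <| hw.tsupport_subset <|
    tsupport_comp_subset_preimage w (f := fun y => y + t) (by fun_prop) hy
  norm_le_one y := hw.norm_le_one (y + t)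

theorem exists_norm_divN_le (hw : IsTestField U w) : ∃ D, ∀ x, ‖divN w x‖ ≤ D :=
  (hasCompactSupport_divN hw.hasCompactSupport).exists_bound_of_continuous
    (continuous_divN hw.contDiff)

theorem divN_eq_zero (hw : IsTestField U w) {x : ℝ^N} (hx : x ∉ U) : divN w x = 0 :=
  divN_eq_zero_of_notMem_tsupport fun h => hx (hw.tsupport_subset h)

theorem setIntegral_mul_divN (hw : IsTestField U w) (u : ℝ^N → ℝ) :
    ∫ x in U, u x * divN w x = ∫ x, u x * divN w x :=
  setIntegral_eq_integral_of_forall_compl_eq_zero fun x hx => by rw [hw.divN_eq_zero hx, mul_zero]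

theorem integrable_mul_divN (hw : IsTestField U w) (hu : LocallyIntegrableOn u U) :
    Integrable fun x => u x * divN w x := by
  obtain ⟨D, hD⟩ := hw.exists_norm_divN_le
  have hK : IntegrableOn (fun x => u x * divN w x) (tsupport w) :=
    (hu.integrableOn_compact_subset hw.tsupport_subset hw.hasCompactSupport).mul_bdd
      (continuous_divN hw.contDiff).aestronglyMeasurable (.of_forall hD)
  refine (integrableOn_iff_integrable_of_support_subset fun x hx => ?_).1 hK
  contrapose! hx
  simp [divN_eq_zero_of_notMem_tsupport hx]

theorem fderiv_apply_eq_zero (hw : IsTestField U w) (f : ℝ^N → ℝ) {x : ℝ^N} (hx : x ∉ U) :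
    fderiv ℝ f x (w x) = 0 := by
  rw [image_eq_zero_of_notMem_tsupport fun h => hx (hw.tsupport_subset h), map_zero]

theorem ofReal_neg_integral_mul_fderiv_le (hw : IsTestField U w) (u f : ℝ^N → ℝ) :
    ENNReal.ofReal (-∫ x, u x * fderiv ℝ f x (w x)) ≤ ∫⁻ x in U, ‖u x‖ₑ * ‖fderiv ℝ f x‖ₑ :=
  calc ENNReal.ofReal (-∫ x, u x * fderiv ℝ f x (w x))
    _ ≤ ‖∫ x, u x * fderiv ℝ f x (w x)‖ₑ := by
      rw [← enorm_neg]
      exact Real.ofReal_le_enorm _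
    _ = ‖∫ x in U, u x * fderiv ℝ f x (w x)‖ₑ := by
      rw [setIntegral_eq_integral_of_forall_compl_eq_zero fun x hx => by
        rw [hw.fderiv_apply_eq_zero f hx, mul_zero]]
    _ ≤ ∫⁻ x in U, ‖u x * fderiv ℝ f x (w x)‖ₑ := enorm_integral_le_lintegral_enorm _
    _ ≤ ∫⁻ x in U, ‖u x‖ₑ * ‖fderiv ℝ f x‖ₑ := lintegral_mono fun x => by
      rw [enorm_mul]
      gcongr
      exact enorm_le_iff_norm_le.2 ((fderiv ℝ f x).unit_le_opNorm _ (hw.norm_le_one x))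

end IsTestField

theorem TVsup_le_iff :
    TVsup u U ≤ C ↔ ∀ w, IsTestField U w → ENNReal.ofReal (∫ x, u x * divN w x) ≤ C := by
  refine iSup_le_iff.trans ⟨fun h w hw => ?_, fun h w => ?_⟩
  · rw [← hw.setIntegral_mul_divN]
    exact h ⟨w, hw.1, hw.2, hw.3, hw.4⟩
  · have hw : IsTestField U w.1 := ⟨w.2.1, w.2.2.1, w.2.2.2.1, w.2.2.2.2⟩
    rw [hw.setIntegral_mul_divN]
    exact h w hw

theorem IsTestField.ofReal_integral_le_TVsup (hw : IsTestField U w) (u : ℝ^N → ℝ) :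
    ENNReal.ofReal (∫ x, u x * divN w x) ≤ TVsup u U :=
  TVsup_le_iff.1 le_rfl w hw

end TestField

section TotalVariation

variable {U V : Set ℝ^N} {f u v : ℝ^N → ℝ} {C : ℝ≥0∞}

theorem TVsup_mono (h : V ⊆ U) : TVsup u V ≤ TVsup u U :=
  TVsup_le_iff.2 fun _ hw => (hw.mono (hw.tsupport_subset.trans h)).ofReal_integral_le_TVsup u

theorem TVsup_congr (h : EqOn u v U) : TVsup u U = TVsup v U := by
  refine eq_of_forall_ge_iff fun C => ?_
  simp only [TVsup_le_iff]
  refine forall₂_congr fun w hw => ?_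
  congr! 4 with x
  by_cases hx : x ∈ U
  · rw [h hx]
  · simp [hw.divN_eq_zero hx]

theorem TVsup_le_of_forall_isCompact (h : ∀ K ⊆ U, IsCompact K → TVsup u K ≤ C) :
    TVsup u U ≤ C :=
  TVsup_le_iff.2 fun _ hw =>
    ((hw.mono subset_rfl).ofReal_integral_le_TVsup u).trans
      (h _ hw.tsupport_subset hw.hasCompactSupport)

theorem TVsup_add_le (hu : LocallyIntegrableOn u U) (hv : LocallyIntegrableOn v U) :
    TVsup (fun x => u x + v x) U ≤ TVsup u U + TVsup v U :=
  TVsup_le_iff.2 fun w hw => calc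
    ENNReal.ofReal (∫ x, (u x + v x) * divN w x)
    _ = ENNReal.ofReal ((∫ x, u x * divN w x) + ∫ x, v x * divN w x) := by
      simp_rw [add_mul]
      rw [integral_add (hw.integrable_mul_divN hu) (hw.integrable_mul_divN hv)]
    _ ≤ ENNReal.ofReal (∫ x, u x * divN w x) + ENNReal.ofReal (∫ x, v x * divN w x) :=
      ENNReal.ofReal_add_le
    _ ≤ TVsup u U + TVsup v U :=
      add_le_add (hw.ofReal_integral_le_TVsup u) (hw.ofReal_integral_le_TVsup v)

theorem TVsup_const_mul_le (c : ℝ) (u : ℝ^N → ℝ) (U : Set ℝ^N) :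
    TVsup (fun x => c * u x) U ≤ ENNReal.ofReal |c| * TVsup u U := by
  refine TVsup_le_iff.2 fun w hw => ?_
  let s : ℝ := SignType.sign c
  have hcs : |c| * s = c := abs_mul_sign c
  have hs : |s| ≤ 1 := by
    rcases lt_trichotomy c 0 with h | rfl | h <;> simp [s, *]
  have hsw : IsTestField U fun x => s • w x := hw.smul contDiff_const fun _ => hs
  have hdiv (x : ℝ^N) : divN (fun x => s • w x) x = s * divN w x := by
    simpa using divN_smul (differentiableAt_const s) (hw.contDiff.differentiable one_ne_zero x)
  calc ENNReal.ofReal (∫ x, c * u x * divN w x)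
    _ = ENNReal.ofReal (|c| * ∫ x, u x * divN (fun x => s • w x) x) := by
      rw [← integral_const_mul]
      congr 2 with x
      rw [hdiv]
      linear_combination -(u x * divN w x) * hcs
    _ ≤ ENNReal.ofReal |c| * TVsup u U := by
      rw [ENNReal.ofReal_mul (abs_nonneg c)]
      gcongr
      exact hsw.ofReal_integral_le_TVsup u

theorem TVsup_le_lintegral_fderiv (hf : ContDiff ℝ 1 f) (U : Set ℝ^N) :
    TVsup f U ≤ ∫⁻ x in U, ‖fderiv ℝ f x‖ₑ := by
  refine TVsup_le_iff.2 fun w hw => ?_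
  rw [integral_mul_divN_eq_neg_integral_fderiv hf hw.contDiff hw.hasCompactSupport]
  simpa using hw.ofReal_neg_integral_mul_fderiv_le (fun _ => 1) f

theorem TVsup_const (c : ℝ) (U : Set ℝ^N) : TVsup (fun _ => c) U = 0 :=
  le_zero_iff.1 <| TVsup_le_iff.2 fun w hw => by
    rw [integral_const_mul, integral_divN_eq_zero hw.contDiff hw.hasCompactSupport, mul_zero,
      ENNReal.ofReal_zero]

theorem TVsup_mul_le (hu : LocallyIntegrableOn u U) (hf : ContDiff ℝ 1 f) (hf1 : ∀ x, |f x| ≤ 1) :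
    TVsup (fun x => f x * u x) U ≤ TVsup u U + ∫⁻ x in U, ‖u x‖ₑ * ‖fderiv ℝ f x‖ₑ := by
  refine TVsup_le_iff.2 fun w hw => ?_
  have hfw : IsTestField U fun x => f x • w x := hw.smul hf hf1
  have hdiv (x : ℝ^N) :
      divN (fun y => f y • w y) x = f x * divN w x + fderiv ℝ f x (w x) :=
    divN_smul (hf.differentiable one_ne_zero x) (hw.contDiff.differentiable one_ne_zero x)
  have hint_w : Integrable fun x => u x * f x * divN w x :=
    (hw.mono subset_rfl).integrable_mul_divN <| (hu.mono_set hw.tsupport_subset).mul_continuousOn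
      hf.continuous.continuousOn (isClosed_tsupport w).isLocallyClosed
  have hint_fw := hfw.integrable_mul_divN hu
  have hint_fderiv : Integrable fun x => u x * fderiv ℝ f x (w x) :=
    (hint_fw.sub hint_w).congr <| .of_forall fun x => by simp only [Pi.sub_apply, hdiv]; ring
  calc ENNReal.ofReal (∫ x, f x * u x * divN w x)
    _ = ENNReal.ofReal ((∫ x, u x * divN (fun y => f y • w y) x) +
          -∫ x, u x * fderiv ℝ f x (w x)) := by
      rw [← sub_eq_add_neg, ← integral_sub hint_fw hint_fderiv]
      congr 2 with x
      rw [hdiv]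
      ring
    _ ≤ TVsup u U + ∫⁻ x in U, ‖u x‖ₑ * ‖fderiv ℝ f x‖ₑ :=
      ENNReal.ofReal_add_le.trans <| add_le_add (hfw.ofReal_integral_le_TVsup u)
        (hw.ofReal_neg_integral_mul_fderiv_le u f)

theorem TVsup_le_of_tendsto {v : ℕ → ℝ^N → ℝ} {G : ℝ^N → ℝ}
    (hv : ∀ n, AEStronglyMeasurable (v n) (volume.restrict U)) (hG : LocallyIntegrableOn G U)
    (hbound : ∀ n, ∀ᵐ x ∂volume.restrict U, |v n x| ≤ G x)
    (hlim : ∀ᵐ x ∂volume.restrict U, Tendsto (fun n => v n x) atTop (𝓝 (u x)))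
    (hTV : ∀ n, TVsup (v n) U ≤ C) : TVsup u U ≤ C := by
  refine TVsup_le_iff.2 fun w hw => ?_
  have hconv : Tendsto (fun n => ∫ x, v n x * divN w x) atTop (𝓝 (∫ x, u x * divN w x)) := by
    simp_rw [← hw.setIntegral_mul_divN]
    refine tendsto_integral_of_dominated_convergence (fun x => ‖G x * divN w x‖)
      (fun n => (hv n).mul (continuous_divN hw.contDiff).aestronglyMeasurable)
      (hw.integrable_mul_divN hG).norm.integrableOn (fun n => ?_) ?_
    · filter_upwards [hbound n] with x hx
      simp only [norm_mul]
      gcongr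
      exact hx.trans (le_abs_self _)
    · filter_upwards [hlim] with x hx using hx.mul_const _
  exact le_of_tendsto' (ENNReal.tendsto_ofReal hconv) fun n =>
    (hw.ofReal_integral_le_TVsup (v n)).trans (hTV n)

theorem TVsup_sum_le {ι : Type*} (s : Finset ι) {v : ι → ℝ^N → ℝ}
    (hv : ∀ i ∈ s, LocallyIntegrableOn (v i) U) :
    TVsup (fun x => ∑ i ∈ s, v i x) U ≤ ∑ i ∈ s, TVsup (v i) U := by
  refine TVsup_le_iff.2 fun w hw => ?_
  simp_rw [Finset.sum_mul]
  rw [integral_finsetSum _ fun i hi => hw.integrable_mul_divN (hv i hi)]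
  exact (Finset.le_sum_of_subadditive _ ENNReal.ofReal_zero.le
    (fun _ _ => ENNReal.ofReal_add_le) _ _).trans <|
    Finset.sum_le_sum fun i _ => hw.ofReal_integral_le_TVsup (v i)

theorem TVsup_tsum_le {v : ℕ → ℝ^N → ℝ} {c : ℕ → ℝ} (hv : ∀ n, Continuous (v n))
    (hc : Summable c) (hvc : ∀ n x, |v n x| ≤ c n) (U : Set ℝ^N) :
    TVsup (fun x => ∑' n, v n x) U ≤ ∑' n, TVsup (v n) U := by
  have hsum (x : ℝ^N) : Summable fun n => v n x := .of_norm_bounded hc fun n => hvc n x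
  refine TVsup_le_of_tendsto (v := fun n x => ∑ i ∈ Finset.range n, v i x)
    (G := fun _ => ∑' n, c n) (fun n => ?_) (locallyIntegrableOn_const _)
    (fun n => .of_forall fun x => ?_) (.of_forall fun x => (hsum x).hasSum.tendsto_sum_nat)
    fun n => ?_
  · exact (continuous_finsetSum _ fun i _ => hv i).aestronglyMeasurable
  · calc |∑ i ∈ Finset.range n, v i x|
      _ ≤ ∑ i ∈ Finset.range n, c i :=
        (Finset.abs_sum_le_sum_abs _ _).trans (Finset.sum_le_sum fun i _ => hvc i x)
      _ ≤ ∑' n, c n := hc.sum_le_tsum _ fun i _ => (abs_nonneg _).trans (hvc i x)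
  · exact (TVsup_sum_le _ fun i _ => (hv i).locallyIntegrable.locallyIntegrableOn _).trans
      (ENNReal.sum_le_tsum _)

end TotalVariation

section ChainRule

variable {E : Type*} [NormedAddCommGroup E] {U V : Set ℝ^N} {k u v : ℝ^N → ℝ} {F : ℝ → ℝ} {M δ : ℝ}

theorem TVsup_comp_le_of_contDiff (hv : ContDiff ℝ 1 v) (hF : ContDiff ℝ 2 F)
    (hF1 : ∀ t, |deriv F t| ≤ 1) (U : Set ℝ^N) : TVsup (fun x => F (v x)) U ≤ TVsup v U := by
  refine TVsup_le_iff.2 fun w hw => ?_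
  have hFv : ContDiff ℝ 1 fun x => F (v x) := (hF.of_le one_le_two).comp hv
  have hFw : IsTestField U fun x => deriv F (v x) • w x :=
    hw.smul (hF.deriv'.comp hv) fun x => hF1 (v x)
  have hchain (x : ℝ^N) : fderiv ℝ (fun y => F (v y)) x = deriv F (v x) • fderiv ℝ v x :=
    ((hF.differentiable two_ne_zero (v x)).hasDerivAt.comp_hasFDerivAt x
      (hv.differentiable one_ne_zero x).hasFDerivAt).fderiv
  calc ENNReal.ofReal (∫ x, F (v x) * divN w x)
    _ = ENNReal.ofReal (-∫ x, fderiv ℝ (fun y => F (v y)) x (w x)) := by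
      rw [integral_mul_divN_eq_neg_integral_fderiv hFv hw.contDiff hw.hasCompactSupport]
    _ = ENNReal.ofReal (∫ x, v x * divN (fun y => deriv F (v y) • w y) x) := by
      rw [integral_mul_divN_eq_neg_integral_fderiv hv hFw.contDiff hFw.hasCompactSupport]
      simp [hchain]
    _ ≤ TVsup v U := hFw.ofReal_integral_le_TVsup v

theorem ofReal_integral_le_lintegral_ofReal {α : Type*} [MeasurableSpace α] (μ : Measure α)
    (f : α → ℝ) : ENNReal.ofReal (∫ x, f x ∂μ) ≤ ∫⁻ x, ENNReal.ofReal (f x) ∂μ := by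
  by_cases hf : Integrable f μ
  · calc ENNReal.ofReal (∫ x, f x ∂μ)
      _ ≤ ENNReal.ofReal (∫ x, max (f x) 0 ∂μ) :=
        ENNReal.ofReal_le_ofReal (integral_mono hf hf.pos_part fun x => le_max_left _ _)
      _ = ∫⁻ x, ENNReal.ofReal (f x) ∂μ := by
        rw [ofReal_integral_eq_lintegral_ofReal hf.pos_part (.of_forall fun x => le_max_right _ _)]
        simp
  · simp [integral_undef hf]

theorem integral_convolution_mul_divN (hk : Integrable k) (hu : Integrable u) {w : ℝ^N → ℝ^N}
    (hw : ContDiff ℝ 1 w) (hwc : HasCompactSupport w) :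
    ∫ x, (k ⋆ u) x * divN w x = ∫ t, k t * ∫ y, u y * divN (fun z => w (z + t)) y := by
  obtain ⟨D, hD⟩ := (hasCompactSupport_divN hwc).exists_bound_of_continuous (continuous_divN hw)
  have hint : Integrable (Function.uncurry fun x t : ℝ^N => k t * u (x - t) * divN w x)
      (volume.prod volume) :=
    (hk.convolution_integrand (ContinuousLinearMap.lsmul ℝ ℝ) hu).mul_bdd
      ((continuous_divN hw).comp continuous_fst).aestronglyMeasurable (.of_forall fun p => hD p.1)
  calc ∫ x, (k ⋆ u) x * divN w x
    _ = ∫ x, ∫ t, k t * u (x - t) * divN w x := by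
      simp only [convolution_lsmul, smul_eq_mul, integral_mul_const]
    _ = ∫ t, ∫ x, k t * u (x - t) * divN w x := integral_integral_swap hint
    _ = ∫ t, k t * ∫ y, u y * divN (fun z => w (z + t)) y := by
      congr with t
      rw [← integral_add_right_eq_self _ t, ← integral_const_mul]
      simp only [divN_comp_add_right, add_sub_cancel_right, mul_assoc]

theorem TVsup_convolution_le (hk : Integrable k) (hk0 : 0 ≤ k) (hu : Integrable u)
    (hVU : ∀ x ∈ V, ∀ t ∈ Function.support k, x - t ∈ U) :
    TVsup (k ⋆ u) V ≤ ENNReal.ofReal (∫ t, k t) * TVsup u U := by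
  refine TVsup_le_iff.2 fun w hw => ?_
  rw [integral_convolution_mul_divN hk hu hw.contDiff hw.hasCompactSupport]
  calc ENNReal.ofReal (∫ t, k t * ∫ y, u y * divN (fun z => w (z + t)) y)
    _ ≤ ∫⁻ t, ENNReal.ofReal (k t * ∫ y, u y * divN (fun z => w (z + t)) y) :=
      ofReal_integral_le_lintegral_ofReal _ _
    _ ≤ ∫⁻ t, ENNReal.ofReal (k t) * TVsup u U := by
      refine lintegral_mono fun t => ?_
      rw [ENNReal.ofReal_mul (hk0 t)]
      by_cases ht : k t = 0
      · simp [ht]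
      have hwt : IsTestField U fun z => w (z + t) :=
        hw.comp_add_right fun y hy => by simpa using hVU (y + t) hy t ht
      gcongr
      exact hwt.ofReal_integral_le_TVsup u
    _ = ENNReal.ofReal (∫ t, k t) * TVsup u U := by
      rw [lintegral_mul_const'' _ hk.aestronglyMeasurable.aemeasurable.ennreal_ofReal,
        ofReal_integral_eq_lintegral_ofReal hk (.of_forall hk0)]

/-- Bumps at the origin of outer radius `δ / (n + 1)`, whose normalizations are mollifiers. -/
noncomputable def shrinkingBump (E : Type*) [NormedAddCommGroup E] (hδ : 0 < δ) (n : ℕ) :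
    ContDiffBump (0 : E) where
  rIn := δ / (n + 1) / 2
  rOut := δ / (n + 1)
  rIn_pos := by positivity
  rIn_lt_rOut := half_lt_self (by positivity)

theorem shrinkingBump_rOut_le (hδ : 0 < δ) (n : ℕ) : (shrinkingBump E hδ n).rOut ≤ δ :=
  div_le_self hδ.le (by simp)

theorem tendsto_shrinkingBump_rOut (hδ : 0 < δ) :
    Tendsto (fun n => (shrinkingBump E hδ n).rOut) atTop (𝓝 0) := by
  simpa [shrinkingBump, div_eq_mul_inv] using
    (tendsto_one_div_add_atTop_nhds_zero_nat (𝕜 := ℝ)).const_mul δ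

theorem exists_contDiff_tendsto_TVsup_le (hU : IsOpen U) (hu : LocallyIntegrableOn u U)
    {K : Set ℝ^N} (hK : IsCompact K) (hKU : K ⊆ U) :
    ∃ v : ℕ → ℝ^N → ℝ, (∀ n, ContDiff ℝ 1 (v n)) ∧ (∀ n, TVsup (v n) K ≤ TVsup u U) ∧
      ∀ᵐ x ∂volume.restrict K, Tendsto (fun n => v n x) atTop (𝓝 (u x)) := by
  obtain ⟨δ, hδ, hδU⟩ := hK.exists_cthickening_subset_open hU hKU
  let T : Set ℝ^N := Metric.cthickening δ K
  have hT : IsCompact T := hK.cthickening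
  have hint : Integrable (T.indicator u) :=
    (hu.integrableOn_compact_subset hδU hT).integrable_indicator hT.measurableSet
  let φ := shrinkingBump (ℝ^N) hδ
  refine ⟨fun n => (φ n).normed volume ⋆ T.indicator u, fun n => ?_, fun n => ?_, ?_⟩
  · exact (φ n).hasCompactSupport_normed.contDiff_convolution_left _ (φ n).contDiff_normed
      hint.locallyIntegrable
  · have hmem (x : ℝ^N) (hx : x ∈ K) (t : ℝ^N) (ht : t ∈ Function.support ((φ n).normed volume)) :
        x - t ∈ T := by
      rw [(φ n).support_normed_eq, mem_ball_zero_iff] at ht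
      refine Metric.mem_cthickening_of_dist_le _ x _ _ hx ?_
      rw [dist_eq_norm, sub_sub_cancel_left, norm_neg]
      exact ht.le.trans (shrinkingBump_rOut_le hδ n)
    calc TVsup ((φ n).normed volume ⋆ T.indicator u) K
      _ ≤ TVsup (T.indicator u) T := by
        simpa [(φ n).integral_normed] using
          TVsup_convolution_le (φ n).integrable_normed (φ n).nonneg_normed hint hmem
      _ = TVsup u T := TVsup_congr fun x hx => indicator_of_mem hx u
      _ ≤ TVsup u U := TVsup_mono hδU
  · have hlim := ContDiffBump.ae_convolution_tendsto_right_of_locallyIntegrable (φ := φ) (K := 2)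
      (tendsto_shrinkingBump_rOut hδ) (.of_forall fun n => (mul_div_cancel₀ _ two_ne_zero).ge)
      hint.locallyIntegrable
    filter_upwards [ae_restrict_of_ae hlim, ae_restrict_mem hK.measurableSet] with x hx hxK
    rwa [indicator_of_mem (Metric.self_subset_cthickening K hxK)] at hx

theorem TVsup_comp_le_of_contDiff_of_bounded (hU : IsOpen U) (hu : LocallyIntegrableOn u U)
    (hF : ContDiff ℝ 2 F) (hF1 : ∀ t, |deriv F t| ≤ 1) (hFM : ∀ t, |F t| ≤ M) :
    TVsup (fun x => F (u x)) U ≤ TVsup u U := by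
  refine TVsup_le_of_forall_isCompact fun K hKU hK => ?_
  obtain ⟨v, hv, hvTV, hvu⟩ := exists_contDiff_tendsto_TVsup_le hU hu hK hKU
  refine TVsup_le_of_tendsto (v := fun n x => F (v n x)) (G := fun _ => M)
    (fun n => (hF.continuous.comp (hv n).continuous).aestronglyMeasurable)
    (locallyIntegrableOn_const M) (fun n => .of_forall fun x => hFM _) ?_ fun n =>
      (TVsup_comp_le_of_contDiff (hv n) hF hF1 K).trans (hvTV n)
  filter_upwards [hvu] with x hx using (hF.continuous.tendsto _).comp hx

theorem locallyIntegrableOn_comp_of_lipschitzWith {X : Type*} [TopologicalSpace X]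
    [LocallyCompactSpace X] [MeasurableSpace X] {μ : Measure X} [IsFiniteMeasureOnCompacts μ]
    {u : X → ℝ} {U : Set X} (hU : IsOpen U) (hu : LocallyIntegrableOn u U μ)
    (hF : LipschitzWith 1 F) : LocallyIntegrableOn (fun x => F (u x)) U μ := by
  refine (locallyIntegrableOn_iff hU.isLocallyClosed).2 fun K hKU hK => ?_
  have huK : IntegrableOn u K μ := hu.integrableOn_compact_subset hKU hK
  have hconst : IntegrableOn (fun _ => |F 0|) K μ := integrableOn_const hK.measure_ne_top
  refine (hconst.add huK.norm).mono'
    (hF.continuous.comp_aestronglyMeasurable huK.aestronglyMeasurable) (.of_forall fun x => ?_)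
  have hlip : |F (u x) - F 0| ≤ |u x| := by simpa [Real.dist_eq] using hF.dist_le_mul (u x) 0
  calc |F (u x)|
    _ ≤ |F (u x) - F 0| + |F 0| := by simpa using abs_add_le (F (u x) - F 0) (F 0)
    _ ≤ |F 0| + |u x| := by linarith

theorem lipschitzWith_mul_sin_div (c : ℝ) : LipschitzWith 1 fun t => c * Real.sin (t / c) := by
  rcases eq_or_ne c 0 with rfl | hc
  · simpa using LipschitzWith.const' (α := ℝ) (K := 1) (0 : ℝ)
  refine .of_dist_le_mul fun t s => ?_
  calc dist (c * Real.sin (t / c)) (c * Real.sin (s / c))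
    _ = |c| * dist (Real.sin (t / c)) (Real.sin (s / c)) := by
      rw [Real.dist_eq, Real.dist_eq, ← mul_sub, abs_mul]
    _ ≤ |c| * dist (t / c) (s / c) := by
      gcongr
      simpa using Real.lipschitzWith_sin.dist_le_mul (t / c) (s / c)
    _ = (1 : NNReal) * dist t s := by
      rw [Real.dist_eq, Real.dist_eq, ← abs_mul, mul_sub, mul_div_cancel₀ _ hc,
        mul_div_cancel₀ _ hc, NNReal.coe_one, one_mul]

theorem tendsto_mul_sin_div (t : ℝ) :
    Tendsto (fun n : ℕ => n * Real.sin (t / n)) atTop (𝓝 t) := by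
  simpa [div_eq_inv_mul] using (Real.hasDerivAt_sin 0).hasFDerivAt.lim t
    (c := fun n : ℕ => (n : ℝ)) (by simpa using tendsto_natCast_atTop_atTop)

theorem TVsup_comp_le_of_contDiff_of_lipschitzWith (hU : IsOpen U) (hu : LocallyIntegrableOn u U)
    (hF : ContDiff ℝ 2 F) (hFL : LipschitzWith 1 F) :
    TVsup (fun x => F (u x)) U ≤ TVsup u U := by
  have hFu : LocallyIntegrableOn (fun x => F (u x)) U :=
    locallyIntegrableOn_comp_of_lipschitzWith hU hu hFL
  refine TVsup_le_of_tendsto (v := fun n x => n * Real.sin (F (u x) / n))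
    (G := fun x => |F (u x)|) (fun n => ?_) hFu.norm (fun n => .of_forall fun x => ?_)
    (.of_forall fun x => tendsto_mul_sin_div _) fun n => ?_
  · exact (lipschitzWith_mul_sin_div n).continuous.comp_aestronglyMeasurable
      hFu.aestronglyMeasurable
  · simpa [Real.dist_eq] using (lipschitzWith_mul_sin_div n).dist_le_mul (F (u x)) 0
  · refine TVsup_comp_le_of_contDiff_of_bounded (F := fun t => n * Real.sin (F t / n)) (M := n)
      hU hu (by fun_prop) (fun t => ?_) fun t => ?_
    · exact (norm_deriv_le_of_lipschitz ((lipschitzWith_mul_sin_div n).comp hFL)).trans_eq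
        (by simp)
    · rw [abs_mul, Nat.abs_cast]
      exact mul_le_of_le_one_right n.cast_nonneg (Real.abs_sin_le_one _)

theorem lipschitzWith_normed_convolution (φ : ContDiffBump (0 : ℝ)) (hF : LipschitzWith 1 F) :
    LipschitzWith 1 (φ.normed volume ⋆ F) := by
  have hint (s : ℝ) : Integrable fun t => φ.normed volume t • F (s - t) :=
    φ.hasCompactSupport_normed.convolutionExists_left (ContinuousLinearMap.lsmul ℝ ℝ)
      (φ.contDiff_normed (n := 0)).continuous hF.continuous.locallyIntegrable s
  refine .of_dist_le_mul fun s s' => ?_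
  rw [NNReal.coe_one, one_mul, dist_eq_norm, convolution_lsmul, convolution_lsmul,
    ← integral_sub (hint s) (hint s')]
  calc ‖∫ t, (φ.normed volume t • F (s - t) - φ.normed volume t • F (s' - t))‖
    _ ≤ ∫ t, φ.normed volume t * dist s s' :=
      norm_integral_le_of_norm_le (φ.integrable_normed.mul_const _) <| .of_forall fun t => by
        rw [← smul_sub, norm_smul, Real.norm_of_nonneg (φ.nonneg_normed t), ← dist_eq_norm]
        gcongr
        · exact φ.nonneg_normed t
        · simpa using hF.dist_le_mul (s - t) (s' - t)
    _ = dist s s' := by rw [integral_mul_const, φ.integral_normed, one_mul]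

theorem TVsup_comp_le (hU : IsOpen U) (hu : LocallyIntegrableOn u U) (hF : LipschitzWith 1 F) :
    TVsup (fun x => F (u x)) U ≤ TVsup u U := by
  have hFu : LocallyIntegrableOn (fun x => F (u x)) U :=
    locallyIntegrableOn_comp_of_lipschitzWith hU hu hF
  let φ := shrinkingBump ℝ one_pos
  let Fn (n : ℕ) : ℝ → ℝ := (φ n).normed volume ⋆ F
  have hFn (n : ℕ) : LipschitzWith 1 (Fn n) := lipschitzWith_normed_convolution (φ n) hF
  have hdist (n : ℕ) (t : ℝ) : dist (Fn n t) (F t) ≤ 1 :=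
    ContDiffBump.dist_normed_convolution_le hF.continuous.aestronglyMeasurable fun s hs =>
      (hF.dist_le_mul s t).trans <| by
        simpa using (Metric.mem_ball.1 hs).le.trans (shrinkingBump_rOut_le one_pos n)
  refine TVsup_le_of_tendsto (v := fun n x => Fn n (u x)) (G := fun x => |F (u x)| + 1)
    (fun n => (hFn n).continuous.comp_aestronglyMeasurable hu.aestronglyMeasurable)
    (hFu.norm.add (locallyIntegrableOn_const 1)) (fun n => .of_forall fun x => ?_)
    (.of_forall fun x => ContDiffBump.convolution_tendsto_right_of_continuous
      (tendsto_shrinkingBump_rOut one_pos) hF.continuous (u x))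
    fun n => TVsup_comp_le_of_contDiff_of_lipschitzWith hU hu ?_ (hFn n)
  · have := hdist n (u x)
    rw [Real.dist_eq] at this
    linarith [abs_sub_abs_le_abs_sub (Fn n (u x)) (F (u x))]
  · exact (φ n).hasCompactSupport_normed.contDiff_convolution_left _ (φ n).contDiff_normed
      hF.continuous.locallyIntegrable

end ChainRule

section FiniteVariation

variable {U : Set ℝ^N} {u v : ℝ^N → ℝ} {F : ℝ → ℝ}

/-- `u` is locally integrable on `U` and has finite total variation there. Only local integrability
is asked for, so that constants qualify on unbounded sets. -/
structure HasFiniteVariationOn (u : ℝ^N → ℝ) (U : Set ℝ^N) : Prop where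
  locallyIntegrableOn : LocallyIntegrableOn u U
  TVsup_lt_top : TVsup u U < ⊤

namespace HasFiniteVariationOn

theorem const (c : ℝ) (U : Set ℝ^N) : HasFiniteVariationOn (fun _ => c) U :=
  ⟨locallyIntegrableOn_const c, by simp [TVsup_const]⟩

theorem add (hu : HasFiniteVariationOn u U) (hv : HasFiniteVariationOn v U) :
    HasFiniteVariationOn (fun x => u x + v x) U :=
  ⟨hu.1.add hv.1, (TVsup_add_le hu.1 hv.1).trans_lt (ENNReal.add_lt_top.2 ⟨hu.2, hv.2⟩)⟩

theorem comp_lipschitzWith (hu : HasFiniteVariationOn u U) (hU : IsOpen U)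
    (hF : LipschitzWith 1 F) : HasFiniteVariationOn (fun x => F (u x)) U :=
  ⟨locallyIntegrableOn_comp_of_lipschitzWith hU hu.1 hF, (TVsup_comp_le hU hu.1 hF).trans_lt hu.2⟩

theorem neg (hu : HasFiniteVariationOn u U) (hU : IsOpen U) :
    HasFiniteVariationOn (fun x => -u x) U :=
  hu.comp_lipschitzWith hU LipschitzWith.id.neg

theorem sub (hu : HasFiniteVariationOn u U) (hv : HasFiniteVariationOn v U) (hU : IsOpen U) :
    HasFiniteVariationOn (fun x => u x - v x) U := by
  simpa only [sub_eq_add_neg] using hu.add (hv.neg hU)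

protected theorem max (hu : HasFiniteVariationOn u U) (hv : HasFiniteVariationOn v U)
    (hU : IsOpen U) : HasFiniteVariationOn (fun x => max (u x) (v x)) U := by
  simpa only [posPart_def, ← max_add_add_left, add_sub_cancel, add_zero, max_comm]
    using hu.add ((hv.sub hu hU).comp_lipschitzWith hU lipschitzWith_posPart)

protected theorem min (hu : HasFiniteVariationOn u U) (hv : HasFiniteVariationOn v U)
    (hU : IsOpen U) : HasFiniteVariationOn (fun x => min (u x) (v x)) U := by
  simpa only [max_neg_neg, neg_neg] using ((hu.neg hU).max (hv.neg hU) hU).neg hU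

end HasFiniteVariationOn

end FiniteVariation

section Barrier

variable {g : ℝ^N → ℝ} {x x₀ : ℝ^N} {s : ℕ → ℝ} {a : ℝ}

-- Substituting `y = c • (x - x₀)` gives the factor `c ^ (1 - finrank ℝ E)`.
theorem lintegral_fderiv_comp_smul_sub_le {E F : Type*} [NormedAddCommGroup E] [NormedSpace ℝ E]
    [FiniteDimensional ℝ E] [MeasurableSpace E] [BorelSpace E] [NormedAddCommGroup F]
    [NormedSpace ℝ F] (μ : Measure E) [μ.IsAddHaarMeasure] {f : E → F} (hf : ContDiff ℝ 1 f)
    (x₀ : E) {c : ℝ} (hc : 1 ≤ c) :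
    ∫⁻ x, ‖fderiv ℝ (fun y => f (c • (y - x₀))) x‖ₑ ∂μ ≤ ∫⁻ x, ‖fderiv ℝ f x‖ₑ ∂μ := by
  rcases subsingleton_or_nontrivial E with hE | hE
  · simp [Subsingleton.elim (fderiv ℝ _ _) 0]
  have hc0 : 0 < c := one_pos.trans_le hc
  have hmeas : Measurable fun y => ‖fderiv ℝ f y‖ₑ :=
    (hf.continuous_fderiv one_ne_zero).enorm.measurable
  calc ∫⁻ x, ‖fderiv ℝ (fun y => f (c • (y - x₀))) x‖ₑ ∂μ
    _ = ∫⁻ x, ‖c • fderiv ℝ f (c • (x - x₀))‖ₑ ∂μ := by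
      simp only [fderiv_comp_sub (f := fun y => f (c • y)), fderiv_comp_smul]
    _ = ‖c‖ₑ * ∫⁻ x, ‖fderiv ℝ f (c • x)‖ₑ ∂μ := by
      rw [lintegral_sub_right_eq_self fun x => ‖c • fderiv ℝ f (c • x)‖ₑ]
      simp only [enorm_smul]
      exact lintegral_const_mul _ (hmeas.comp (measurable_const_smul c))
    _ = ‖c‖ₑ * (ENNReal.ofReal |(c ^ Module.finrank ℝ E)⁻¹| * ∫⁻ x, ‖fderiv ℝ f x‖ₑ ∂μ) := by
      rw [← lintegral_map hmeas (measurable_const_smul c), Measure.map_addHaar_smul _ hc0.ne',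
        lintegral_smul_measure, smul_eq_mul]
    _ ≤ ∫⁻ x, ‖fderiv ℝ f x‖ₑ ∂μ := by
      rw [← mul_assoc]
      refine mul_le_of_le_one_left' ?_
      rw [Real.enorm_eq_ofReal hc0.le, ← ENNReal.ofReal_mul hc0.le, ENNReal.ofReal_le_one,
        abs_of_pos (by positivity)]
      exact mul_inv_le_one_of_le₀ (le_self_pow₀ hc Module.finrank_pos.ne') (by positivity)

/-- The smooth complement of a bump: it vanishes near `x₀`, and equals `1` at distance at least
`2 / c` from `x₀`. -/
noncomputable def bumpCompl (x₀ : ℝ^N) (c : ℝ) (x : ℝ^N) : ℝ :=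
  1 - (default : ContDiffBump (0 : ℝ^N)) (c • (x - x₀))

theorem contDiff_bumpCompl (x₀ : ℝ^N) (c : ℝ) : ContDiff ℝ 1 (bumpCompl x₀ c) :=
  contDiff_const.sub ((ContDiffBump.contDiff _).comp (by fun_prop))

theorem bumpCompl_nonneg (x₀ : ℝ^N) (c : ℝ) (x : ℝ^N) : 0 ≤ bumpCompl x₀ c x :=
  sub_nonneg.2 (ContDiffBump.le_one _)

theorem bumpCompl_le_one (x₀ : ℝ^N) (c : ℝ) (x : ℝ^N) : bumpCompl x₀ c x ≤ 1 :=
  sub_le_self 1 (ContDiffBump.nonneg _)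

theorem bumpCompl_self (x₀ : ℝ^N) (c : ℝ) : bumpCompl x₀ c x₀ = 0 := by
  rw [bumpCompl, sub_self, smul_zero, ContDiffBump.one_of_mem_closedBall, sub_self]
  exact Metric.mem_closedBall_self (ContDiffBump.rIn_pos _).le

theorem bumpCompl_eq_one {c : ℝ} (hx : 2 ≤ c * dist x x₀) : bumpCompl x₀ c x = 1 := by
  rw [bumpCompl, ContDiffBump.zero_of_le_dist, sub_zero]
  rw [dist_zero_right, norm_smul, ← dist_eq_norm]
  exact hx.trans (by gcongr; exact le_abs_self _)

theorem exists_TVsup_bumpCompl_le (x₀ : ℝ^N) :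
    ∃ C < ⊤, ∀ c, 1 ≤ c → TVsup (bumpCompl x₀ c) univ ≤ C := by
  let b : ContDiffBump (0 : ℝ^N) := default
  have hb : ContDiff ℝ 1 b := b.contDiff
  refine ⟨∫⁻ x, ‖fderiv ℝ b x‖ₑ, ?_, fun c hc => ?_⟩
  · exact ((hb.continuous_fderiv one_ne_zero).integrable_of_hasCompactSupport
      (b.hasCompactSupport.fderiv ℝ)).hasFiniteIntegral
  · calc TVsup (bumpCompl x₀ c) univ
      _ ≤ ∫⁻ x, ‖fderiv ℝ (bumpCompl x₀ c) x‖ₑ := by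
        simpa using TVsup_le_lintegral_fderiv (contDiff_bumpCompl x₀ c) univ
      _ = ∫⁻ x, ‖fderiv ℝ (fun y => b (c • (y - x₀))) x‖ₑ := by
        unfold bumpCompl
        simp only [b, fderiv_const_sub, enorm_neg]
      _ ≤ ∫⁻ x, ‖fderiv ℝ b x‖ₑ := lintegral_fderiv_comp_smul_sub_le volume hb x₀ hc

/-- The continuous function `∑ₙ 2⁻ⁿ (1 - b (sₙ (x - x₀)))`, where `b` is a fixed bump. It vanishes
at `x₀`, and the scales `sₙ` control how fast it grows away from `x₀`. -/
noncomputable def barrier (x₀ : ℝ^N) (s : ℕ → ℝ) (x : ℝ^N) : ℝ :=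
  ∑' n, (1 / 2) ^ n * bumpCompl x₀ (s n) x

theorem barrier_term_nonneg (x₀ : ℝ^N) (s : ℕ → ℝ) (n : ℕ) (x : ℝ^N) :
    0 ≤ (1 / 2) ^ n * bumpCompl x₀ (s n) x :=
  mul_nonneg (by positivity) (bumpCompl_nonneg ..)

theorem abs_barrier_term_le (x₀ : ℝ^N) (s : ℕ → ℝ) (n : ℕ) (x : ℝ^N) :
    |(1 / 2) ^ n * bumpCompl x₀ (s n) x| ≤ (1 / 2) ^ n := by
  rw [abs_of_nonneg (barrier_term_nonneg ..)]
  exact mul_le_of_le_one_right (by positivity) (bumpCompl_le_one ..)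

theorem continuous_barrier (x₀ : ℝ^N) (s : ℕ → ℝ) : Continuous (barrier x₀ s) :=
  continuous_tsum (fun n => (contDiff_bumpCompl x₀ (s n)).continuous.const_mul _)
    summable_geometric_two (abs_barrier_term_le x₀ s)

theorem barrier_nonneg (x₀ : ℝ^N) (s : ℕ → ℝ) (x : ℝ^N) : 0 ≤ barrier x₀ s x :=
  tsum_nonneg fun n => barrier_term_nonneg x₀ s n x

theorem barrier_self (x₀ : ℝ^N) (s : ℕ → ℝ) : barrier x₀ s x₀ = 0 := by
  simp [barrier, bumpCompl_self]

theorem pow_le_barrier {n : ℕ} (hx : 2 ≤ s n * dist x x₀) : (1 / 2) ^ n ≤ barrier x₀ s x := by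
  have hsum : Summable fun n => (1 / 2) ^ n * bumpCompl x₀ (s n) x :=
    .of_norm_bounded summable_geometric_two fun n => abs_barrier_term_le x₀ s n x
  have hle := hsum.le_tsum n fun m _ => barrier_term_nonneg x₀ s m x
  rwa [bumpCompl_eq_one hx, mul_one] at hle

theorem TVsup_barrier_lt_top (x₀ : ℝ^N) (hs : ∀ n, 1 ≤ s n) : TVsup (barrier x₀ s) univ < ⊤ := by
  obtain ⟨C, hC, hCs⟩ := exists_TVsup_bumpCompl_le x₀
  calc TVsup (barrier x₀ s) univ
    _ ≤ ∑' n, TVsup (fun x => (1 / 2) ^ n * bumpCompl x₀ (s n) x) univ :=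
      TVsup_tsum_le (fun n => (contDiff_bumpCompl x₀ (s n)).continuous.const_mul _)
        summable_geometric_two (abs_barrier_term_le x₀ s) univ
    _ ≤ ∑' n : ℕ, ENNReal.ofReal ((1 / 2) ^ n) * C := by
      refine ENNReal.tsum_le_tsum fun n => (TVsup_const_mul_le _ _ _).trans ?_
      rw [abs_of_nonneg (by positivity)]
      gcongr
      exact hCs _ (hs n)
    _ < ⊤ := by
      rw [ENNReal.tsum_mul_right,
        ← ENNReal.ofReal_tsum_of_nonneg (fun n => by positivity) summable_geometric_two]
      exact ENNReal.mul_lt_top ENNReal.ofReal_lt_top hC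

theorem hasFiniteVariationOn_barrier (x₀ : ℝ^N) (hs : ∀ n, 1 ≤ s n) (U : Set ℝ^N) :
    HasFiniteVariationOn (barrier x₀ s) U :=
  ⟨(continuous_barrier x₀ s).locallyIntegrable.locallyIntegrableOn U,
    (TVsup_mono (subset_univ U)).trans_lt (TVsup_barrier_lt_top x₀ hs)⟩

theorem eventually_nhds_inf_ae_iff {X : Type*} [PseudoMetricSpace X] [MeasurableSpace X]
    {σ : Measure X} {x₀ : X} {p : X → Prop} :
    (∀ᶠ x in 𝓝 x₀ ⊓ ae σ, p x) ↔ ∃ δ > 0, ∀ᵐ x ∂σ, dist x x₀ < δ → p x := by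
  constructor
  · intro h
    obtain ⟨s, hs, t, ht, hp⟩ := eventually_inf.1 h
    obtain ⟨δ, hδ, hδs⟩ := Metric.mem_nhds_iff.1 hs
    exact ⟨δ, hδ, mem_of_superset ht fun x hxt hx => hp x ⟨hδs hx, hxt⟩⟩
  · rintro ⟨δ, hδ, hp⟩
    exact eventually_inf.2 ⟨_, Metric.ball_mem_nhds x₀ hδ, _, hp, fun x hx => hx.2 hx.1⟩

theorem tendsto_nhds_inf_ae_iff {X : Type*} [PseudoMetricSpace X] [MeasurableSpace X]
    {σ : Measure X} {g : X → ℝ} {x₀ : X} {a : ℝ} :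
    Tendsto g (𝓝 x₀ ⊓ ae σ) (𝓝 a) ↔
      ∀ ε > 0, ∃ δ > 0, ∀ᵐ x ∂σ, dist x x₀ < δ → |g x - a| ≤ ε := by
  simp only [Metric.nhds_basis_closedBall.tendsto_right_iff, eventually_nhds_inf_ae_iff,
    Metric.mem_closedBall, Real.dist_eq]

-- A point other than `x₀` at distance less than `δ 0` lies in some annulus
-- `δ (n + 1) ≤ dist x x₀ < δ n`, on which `|g - a| ≤ 2⁻ⁿ ≤ barrier x₀ s`.
theorem exists_barrier_dominating {σ : Measure ℝ^N} (hg : Tendsto g (𝓝 x₀ ⊓ ae σ) (𝓝 a)) :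
    ∃ s : ℕ → ℝ, (∀ n, 1 ≤ s n) ∧ ∀ᶠ x in 𝓝 x₀ ⊓ ae σ, |g x - a| ≤ barrier x₀ s x := by
  choose δ hδ hg using fun n : ℕ => tendsto_nhds_inf_ae_iff.1 hg ((1 / 2) ^ n) (by positivity)
  let s (n : ℕ) : ℝ := max 1 (2 / δ (n + 1))
  refine ⟨s, fun n => le_max_left .., eventually_nhds_inf_ae_iff.2 ⟨δ 0, hδ 0, ?_⟩⟩
  filter_upwards [ae_all_iff.2 hg] with x hx hx0
  by_contra! hlt
  have hnear (n : ℕ) : dist x x₀ < δ n := by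
    induction n with
    | zero => exact hx0
    | succ n ih =>
      by_contra! hfar
      have hs : 2 ≤ s n * dist x x₀ := calc
        2 = 2 / δ (n + 1) * δ (n + 1) := (div_mul_cancel₀ 2 (hδ _).ne').symm
        _ ≤ s n * dist x x₀ := by gcongr; exacts [(hδ _).le, le_max_right ..]
      exact (hlt.trans_le ((hx n ih).trans (pow_le_barrier hs))).false
  have hzero : |g x - a| ≤ 0 :=
    ge_of_tendsto' (tendsto_pow_atTop_nhds_zero_of_lt_one (by norm_num) one_half_lt_one)
      fun n => hx n (hnear n)
  exact (hlt.trans_le hzero).not_ge (barrier_nonneg x₀ s x)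

end Barrier

section Trace

variable {U : Set ℝ^N} {σ : Measure ℝ^N} {g u v : ℝ^N → ℝ} {C : ℝ}

theorem setIntegral_div_le_of_forall_le {α : Type*} [MeasurableSpace α] {μ : Measure α} {s : Set α}
    {p q : α → ℝ} {ε : ℝ} (hs : MeasurableSet s) (hμs : μ s ≠ ⊤) (hε : 0 ≤ ε)
    (hq : ∀ y ∈ s, 0 ≤ q y) (hp : IntegrableOn p s μ) (hqp : ∀ y ∈ s, q y ≤ C * p y + ε) :
    (∫ y in s, q y ∂μ) / μ.real s ≤ C * ((∫ y in s, p y ∂μ) / μ.real s) + ε := by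
  have hconst : IntegrableOn (fun _ => ε) s μ := integrableOn_const hμs
  have hle : ∫ y in s, q y ∂μ ≤ C * (∫ y in s, p y ∂μ) + ε * μ.real s := calc
    ∫ y in s, q y ∂μ
    _ ≤ ∫ y in s, (C * p y + ε) ∂μ :=
      integral_mono_of_nonneg (ae_restrict_of_forall_mem hs hq) ((hp.const_mul C).add hconst)
        (ae_restrict_of_forall_mem hs hqp)
    _ = C * (∫ y in s, p y ∂μ) + ε * μ.real s := by
      rw [integral_add (hp.const_mul C) hconst, integral_const_mul, setIntegral_const, smul_eq_mul,
        mul_comm ε]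
  rcases (measureReal_nonneg (μ := μ) (s := s)).eq_or_lt' with h0 | h0
  · simp [h0, hε]
  · rw [div_le_iff₀ h0, add_mul, mul_assoc, div_mul_cancel₀ _ h0.ne']
    exact hle

theorem HasTraceOn.of_eventually_abs_sub_le (htr : HasTraceOn u U g σ) (hU : MeasurableSet U)
    (hu : IntegrableOn u U)
    (huv : ∀ᵐ x ∂σ, ∀ ε > 0, ∀ᶠ y in 𝓝 x, |v y - g x| ≤ C * |u y - g x| + ε) :
    HasTraceOn v U g σ := by
  filter_upwards [htr, huv] with x hux hvx
  refine tendsto_order.2 ⟨fun b hb => .of_forall fun r => hb.trans_le (by positivity),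
    fun ε hε => ?_⟩
  obtain ⟨δ, hδ, hball⟩ := Metric.eventually_nhds_iff_ball.1 (hvx (ε / 2) (half_pos hε))
  have hlim : ∀ᶠ r in 𝓝[>] (0 : ℝ), C * ((∫ y in Metric.ball x r ∩ U, |u y - g x|) /
      (volume (Metric.ball x r ∩ U)).toReal) < ε / 2 :=
    (hux.const_mul C).eventually_lt_const (by simpa using half_pos hε)
  filter_upwards [hlim, nhdsWithin_le_nhds (Iio_mem_nhds hδ)] with r hr hrδ
  have hfin : volume (Metric.ball x r ∩ U) ≠ ⊤ :=
    measure_inter_ne_top_of_left_ne_top measure_ball_lt_top.ne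
  have hint : IntegrableOn (fun y => |u y - g x|) (Metric.ball x r ∩ U) :=
    ((hu.mono_set inter_subset_right).sub (integrableOn_const hfin)).norm
  have hle := setIntegral_div_le_of_forall_le (Metric.isOpen_ball.measurableSet.inter hU) hfin
    (half_pos hε).le (fun y _ => abs_nonneg (v y - g x)) hint
    fun y hy => hball y (Metric.ball_subset_ball (mem_Iio.1 hrδ).le hy.1)
  simp only [Measure.real] at hle
  linarith

end Trace

section EssSup

theorem essSup_mem_Icc {α : Type*} [MeasurableSpace α] {μ : Measure α} {f : α → ℝ} {c : ℝ}
    (hf : ∀ x, 0 ≤ f x) (hc : 0 ≤ c) (hfc : ∀ᵐ x ∂μ, f x ≤ c) : essSup f μ ∈ Icc 0 c := by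
  rcases eq_or_ne μ 0 with rfl | hμ
  · simpa [essSup, limsup_eq] using hc
  have : (ae μ).NeBot := ae_neBot.2 hμ
  exact ⟨le_limsup_of_frequently_le (.of_forall hf) (isBoundedUnder_of_eventually_le hfc),
    limsup_le_of_le (isCoboundedUnder_le_of_le _ hf) hfc⟩

theorem tendsto_essSup_abs_sub {X : Type*} [PseudoMetricSpace X] [MeasurableSpace X]
    [OpensMeasurableSpace X] {ψ : X → ℝ} {x₀ : X} {a : ℝ} (hψ : Tendsto ψ (𝓝 x₀) (𝓝 a))
    (μ : Measure X) (s : Set X) :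
    Tendsto (fun r => essSup (fun y => |ψ y - a|) (μ.restrict (Metric.ball x₀ r \ s)))
      (𝓝 0) (𝓝 0) := by
  refine Metric.nhds_basis_closedBall.tendsto_right_iff.2 fun ε hε => ?_
  obtain ⟨δ, hδ, hball⟩ := Metric.eventually_nhds_iff_ball.1
    (hψ.eventually_mem (Metric.closedBall_mem_nhds a hε))
  filter_upwards [Iio_mem_nhds hδ] with r hr
  have hae : ∀ᵐ y ∂μ.restrict (Metric.ball x₀ r \ s), |ψ y - a| ≤ ε :=
    ae_restrict_of_ae_restrict_of_subset
      (sdiff_subset.trans (Metric.ball_subset_ball (mem_Iio.1 hr).le))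
      (ae_restrict_of_forall_mem Metric.isOpen_ball.measurableSet hball)
  have hmem := essSup_mem_Icc (fun y => abs_nonneg (ψ y - a)) hε.le hae
  rw [Real.closedBall_eq_Icc, zero_sub, zero_add]
  exact ⟨by linarith [hmem.1], hmem.2⟩

end EssSup

section Truncation

variable {U : Set ℝ^N} {σ : Measure ℝ^N} {f g h u : ℝ^N → ℝ} {x₀ : ℝ^N} {a : ℝ}
  {χ : ContDiffBump x₀}

/-- The truncation of `t` at the levels `±h`. -/
def clamp (h t : ℝ) : ℝ := max (-h) (min t h)

theorem abs_clamp_le {h : ℝ} (hh : 0 ≤ h) (t : ℝ) : |clamp h t| ≤ h :=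
  abs_le.2 ⟨le_max_left .., max_le (by linarith) (min_le_right ..)⟩

theorem clamp_of_abs_le {h t : ℝ} (ht : |t| ≤ h) : clamp h t = t := by
  rw [clamp, min_eq_left (abs_le.1 ht).2, max_eq_right (abs_le.1 ht).1]

theorem abs_clamp_sub_clamp_le (h k s t : ℝ) : |clamp h s - clamp k t| ≤ max |h - k| |s - t| := by
  calc |clamp h s - clamp k t|
    _ ≤ max |-h - -k| |min s h - min t k| := abs_max_sub_max_le_max ..
    _ ≤ max |h - k| |s - t| := by
      rw [neg_sub_neg, abs_sub_comm k h]
      exact max_le (le_max_left ..) ((abs_min_sub_min_le_max ..).trans (max_comm _ _).le)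

theorem abs_clamp_sub_self_le {h k b : ℝ} (hb : |b| ≤ k) (t : ℝ) :
    |clamp h t - t| ≤ 2 * |t - b| + |h - k| := by
  have htri : |clamp h t - t| ≤ |clamp h t - clamp k b| + |t - b| := by
    rw [clamp_of_abs_le hb, abs_sub_comm t b]
    exact abs_sub_le ..
  have hlip := abs_clamp_sub_clamp_le h k t b
  linarith [max_le_add_of_nonneg (abs_nonneg (h - k)) (abs_nonneg (t - b))]

theorem HasFiniteVariationOn.clamp (hu : HasFiniteVariationOn u U) (hh : HasFiniteVariationOn h U)
    (hU : IsOpen U) : HasFiniteVariationOn (fun x => clamp (h x) (u x)) U :=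
  (hh.neg hU).max (hu.min hh hU) hU

theorem integrableOn_mul_of_inter_tsupport {X : Type*} [TopologicalSpace X] [MeasurableSpace X]
    [OpensMeasurableSpace X] {μ : Measure X} {f u : X → ℝ} {U : Set X} (hU : MeasurableSet U)
    (hf : Continuous f) (hfc : HasCompactSupport f) (hu : IntegrableOn u (U ∩ tsupport f) μ) :
    IntegrableOn (fun x => f x * u x) U μ := by
  obtain ⟨D, hD⟩ := hfc.exists_bound_of_continuous hf
  refine IntegrableOn.of_forall_sdiff_eq_zero
    (hu.bdd_mul hf.aestronglyMeasurable (.of_forall hD)) hU fun x hx => ?_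
  rw [image_eq_zero_of_notMem_tsupport fun hxf => hx.2 ⟨hx.1, hxf⟩, zero_mul]

theorem HasFiniteVariationOn.contDiff_mul (hu : HasFiniteVariationOn u U) (hU : IsOpen U)
    (hf : ContDiff ℝ 1 f) (hf1 : ∀ x, |f x| ≤ 1) (hfc : HasCompactSupport f)
    (hfu : IntegrableOn u (U ∩ tsupport f)) : HasFiniteVariationOn (fun x => f x * u x) U where
  locallyIntegrableOn :=
    (integrableOn_mul_of_inter_tsupport hU.measurableSet hf.continuous hfc hfu).locallyIntegrableOn
  TVsup_lt_top := by
    have hsub : tsupport (fun x => ‖fderiv ℝ f x‖) ⊆ tsupport f :=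
      (tsupport_comp_subset norm_zero _).trans (tsupport_fderiv_subset ℝ)
    have hint : IntegrableOn (fun x => ‖fderiv ℝ f x‖ * u x) U :=
      integrableOn_mul_of_inter_tsupport hU.measurableSet (hf.continuous_fderiv one_ne_zero).norm
        (hfc.fderiv ℝ).norm (hfu.mono_set (inter_subset_inter_right U hsub))
    refine (TVsup_mul_le hu.1 hf hf1).trans_lt (ENNReal.add_lt_top.2 ⟨hu.2, ?_⟩)
    simpa [HasFiniteIntegral, enorm_mul, mul_comm] using hint.hasFiniteIntegral

theorem integrable_clamp_sub_self {α : Type*} [MeasurableSpace α] {μ : Measure α} {h v : α → ℝ}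
    (hv : Integrable v μ) (hh : AEStronglyMeasurable h μ) (hh0 : ∀ x, 0 ≤ h x) :
    Integrable (fun x => clamp (h x) (v x) - v x) μ := by
  refine (hv.norm.const_mul 2).mono'
    ((hh.neg.sup (hv.aestronglyMeasurable.inf hh)).sub hv.aestronglyMeasurable)
    (.of_forall fun x => ?_)
  simpa using abs_clamp_sub_self_le (h := h x) (abs_zero.trans_le (hh0 x)) (v x)

/-- The function that interpolates, through the cutoff `χ`, between `u` far from `x₀` and the
truncation of `u` to `[a - h, a + h]` near `x₀`. -/
noncomputable def truncateNear (χ : ContDiffBump x₀) (h u : ℝ^N → ℝ) (a : ℝ) (x : ℝ^N) : ℝ :=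
  u x + χ x * (clamp (h x) (u x - a) - (u x - a))

theorem tendsto_truncateNear (χ : ContDiffBump x₀) (u : ℝ^N → ℝ) (a : ℝ)
    (hh : Tendsto h (𝓝 x₀) (𝓝 0)) (hh0 : ∀ x, 0 ≤ h x) :
    Tendsto (truncateNear χ h u a) (𝓝 x₀) (𝓝 a) := by
  refine tendsto_iff_norm_sub_tendsto_zero.2 <|
    squeeze_zero' (.of_forall fun x => norm_nonneg _) ?_ hh
  filter_upwards [χ.eventuallyEq_one] with x hx
  have heq : truncateNear χ h u a x - a = clamp (h x) (u x - a) := by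
    rw [truncateNear, hx, Pi.one_apply]
    ring
  rw [heq]
  exact abs_clamp_le (hh0 x) (u x - a)

theorem eventually_abs_truncateNear_sub_le {x : ℝ^N} (u : ℝ^N → ℝ) (hh : ContinuousAt h x)
    (hx : dist x x₀ ≤ χ.rOut → |g x - a| ≤ h x) {ε : ℝ} (hε : 0 < ε) :
    ∀ᶠ y in 𝓝 x, |truncateNear χ h u a y - g x| ≤ 3 * |u y - g x| + ε := by
  rcases le_or_gt (dist x x₀) χ.rOut with hnear | hfar
  · filter_upwards [Metric.continuousAt_iff'.1 hh ε hε] with y hy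
    have hclamp := abs_clamp_sub_self_le (h := h y) (hx hnear) (u y - a)
    rw [sub_sub_sub_cancel_right] at hclamp
    calc |truncateNear χ h u a y - g x|
      _ = |(u y - g x) + χ y * (clamp (h y) (u y - a) - (u y - a))| := by
        rw [truncateNear, add_sub_right_comm]
      _ ≤ |u y - g x| + |χ y * (clamp (h y) (u y - a) - (u y - a))| := abs_add_le ..
      _ ≤ |u y - g x| + |clamp (h y) (u y - a) - (u y - a)| := by
        rw [abs_mul, abs_of_nonneg χ.nonneg]
        gcongr
        exact mul_le_of_le_one_left (abs_nonneg _) χ.le_one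
      _ ≤ 3 * |u y - g x| + ε := by
        rw [Real.dist_eq] at hy
        linarith
  · have hev : ∀ᶠ y in 𝓝 x, χ.rOut < dist y x₀ :=
      (tendsto_id.dist tendsto_const_nhds).eventually_const_lt hfar
    filter_upwards [hev] with y hy
    rw [truncateNear, χ.zero_of_le_dist hy.le, zero_mul, add_zero]
    linarith [abs_nonneg (u y - g x)]

theorem HasTraceOn.truncateNear (htr : HasTraceOn u U g σ) (hU : MeasurableSet U)
    (hu : IntegrableOn u U) (hh : Continuous h)
    (hgh : ∀ᵐ x ∂σ, dist x x₀ ≤ χ.rOut → |g x - a| ≤ h x) :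
    HasTraceOn (truncateNear χ h u a) U g σ :=
  htr.of_eventually_abs_sub_le hU hu <| hgh.mono fun _ hx _ hε =>
    eventually_abs_truncateNear_sub_le u hh.continuousAt hx hε

theorem integrableOn_inter_tsupport_clamp_sub_self (χ : ContDiffBump x₀) (a : ℝ)
    (hu : IntegrableOn u U) (hh : Continuous h) (hh0 : ∀ x, 0 ≤ h x) :
    IntegrableOn (fun x => clamp (h x) (u x - a) - (u x - a)) (U ∩ tsupport χ) :=
  integrable_clamp_sub_self
    ((hu.mono_set inter_subset_left).sub <| integrableOn_const <|
      measure_inter_ne_top_of_right_ne_top χ.hasCompactSupport.measure_ne_top)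
    hh.aestronglyMeasurable hh0

theorem integrableOn_truncateNear (χ : ContDiffBump x₀) (a : ℝ) (hU : MeasurableSet U)
    (hu : IntegrableOn u U) (hh : Continuous h) (hh0 : ∀ x, 0 ≤ h x) :
    IntegrableOn (truncateNear χ h u a) U :=
  hu.add <| integrableOn_mul_of_inter_tsupport hU χ.continuous χ.hasCompactSupport <|
    integrableOn_inter_tsupport_clamp_sub_self χ a hu hh hh0

theorem HasFiniteVariationOn.truncateNear (hh : HasFiniteVariationOn h U) (χ : ContDiffBump x₀)
    (a : ℝ) (hU : IsOpen U) (hu : IntegrableOn u U) (huTV : TVsup u U < ⊤) (hhc : Continuous h)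
    (hh0 : ∀ x, 0 ≤ h x) : HasFiniteVariationOn (truncateNear χ h u a) U := by
  have hu' : HasFiniteVariationOn u U := ⟨hu.locallyIntegrableOn, huTV⟩
  have hv : HasFiniteVariationOn (fun x => u x - a) U := hu'.sub (.const a U) hU
  exact hu'.add <| ((hv.clamp hh hU).sub hv hU).contDiff_mul hU χ.contDiff
    (fun x => abs_le.2 ⟨by linarith [χ.nonneg' x], χ.le_one⟩) χ.hasCompactSupport
    (integrableOn_inter_tsupport_clamp_sub_self χ a hu hhc hh0)

end Truncation

theorem pointwise_continuous_extension_general {U : Set ℝ^N} (hU : IsOpen U) {σ : Measure ℝ^N}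
    {g u : ℝ^N → ℝ} {x₀ : ℝ^N} {a : ℝ} (hu : IntegrableOn u U) (huTV : TVsup u U < ⊤)
    (htr : HasTraceOn u U g σ) (hg : Tendsto g (𝓝 x₀ ⊓ ae σ) (𝓝 a)) :
    ∃ ψ : ℝ^N → ℝ, IntegrableOn ψ U ∧ TVsup ψ U < ⊤ ∧ HasTraceOn ψ U g σ ∧
      Tendsto ψ (𝓝 x₀) (𝓝 a) := by
  obtain ⟨s, hs, hdom⟩ := exists_barrier_dominating hg
  obtain ⟨δ, hδ, hgδ⟩ := eventually_nhds_inf_ae_iff.1 hdom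
  let χ : ContDiffBump x₀ := ⟨δ / 4, δ / 2, by positivity, by linarith⟩
  let h := barrier x₀ s
  have hhc : Continuous h := continuous_barrier x₀ s
  have hh0 (x : ℝ^N) : 0 ≤ h x := barrier_nonneg x₀ s x
  have hhx₀ : Tendsto h (𝓝 x₀) (𝓝 0) := barrier_self x₀ s ▸ hhc.tendsto x₀
  have hgh : ∀ᵐ x ∂σ, dist x x₀ ≤ χ.rOut → |g x - a| ≤ h x :=
    hgδ.mono fun x hx hle => hx (hle.trans_lt (half_lt_self hδ))
  exact ⟨truncateNear χ h u a, integrableOn_truncateNear χ a hU.measurableSet hu hhc hh0,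
    ((hasFiniteVariationOn_barrier x₀ hs U).truncateNear χ a hU hu huTV hhc hh0).TVsup_lt_top,
    htr.truncateNear hU.measurableSet hu hhc hgh, tendsto_truncateNear χ u a hhx₀ hh0⟩

end

/-- Pointwise continuous extension of boundary data: if
`g ∈ L¹(∂Ω)` is continuous at `x₀ ∈ ∂Ω`, then there is `ψ ∈ BV(ℝᴺ∖Ω̄)` with trace
`g` on `∂Ω` such that `ess sup_{B(x₀,r)∖Ω̄} |ψ − g(x₀)| → 0` as `r → 0`. The
Gagliardo extension theorem (available for the Lipschitz domain `Ω`) is assumed. -/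
theorem pointwise_continuous_extension {N : ℕ}
    (Ω : Set (EuclideanSpace ℝ (Fin N))) (hΩo : IsOpen Ω) (hΩb : Bornology.IsBounded Ω)
    (σ : Measure (EuclideanSpace ℝ (Fin N)))
    (hσ : σ = (μH[(N : ℝ) - 1]).restrict (frontier Ω)) (hσfin : σ univ ≠ ⊤)
    -- the Gagliardo extension theorem for the (Lipschitz) domain Ω
    (hgagliardo : ∀ g' : EuclideanSpace ℝ (Fin N) → ℝ, Integrable g' σ →
      ∃ ψ : EuclideanSpace ℝ (Fin N) → ℝ, IntegrableOn ψ (closure Ω)ᶜ ∧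
        TVsup ψ (closure Ω)ᶜ < ⊤ ∧ HasTraceOn ψ (closure Ω)ᶜ g' σ)
    -- the boundary datum, continuous at x₀ ∈ ∂Ω
    (g : EuclideanSpace ℝ (Fin N) → ℝ) (hg : Integrable g σ)
    (x₀ : EuclideanSpace ℝ (Fin N)) (hx₀ : x₀ ∈ frontier Ω)
    (hcont : ∀ ε > (0:ℝ), ∃ δ > (0:ℝ), ∀ x ∈ frontier Ω, dist x x₀ < δ →
      |g x - g x₀| ≤ ε) :
    ∃ ψ : EuclideanSpace ℝ (Fin N) → ℝ, IntegrableOn ψ (closure Ω)ᶜ ∧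
      TVsup ψ (closure Ω)ᶜ < ⊤ ∧ HasTraceOn ψ (closure Ω)ᶜ g σ ∧
      Tendsto (fun r => essSup (fun y => |ψ y - g x₀|)
        (volume.restrict (Metric.ball x₀ r \ closure Ω)))
        (nhdsWithin 0 (Ioi 0)) (nhds 0) := by
  have hfrontier : ∀ᵐ x ∂σ, x ∈ frontier Ω :=
    hσ ▸ ae_restrict_mem isClosed_frontier.measurableSet
  have hgx₀ : Tendsto g (𝓝 x₀ ⊓ ae σ) (𝓝 (g x₀)) := tendsto_nhds_inf_ae_iff.2 fun ε hε =>
    (hcont ε hε).imp fun δ hδ => ⟨hδ.1, hfrontier.mono hδ.2⟩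
  obtain ⟨u, hu, huTV, htr⟩ := hgagliardo g hg
  obtain ⟨ψ, hψ, hψTV, hψtr, hlim⟩ :=
    pointwise_continuous_extension_general isClosed_closure.isOpen_compl hu huTV htr hgx₀
  exact ⟨ψ, hψ, hψTV, hψtr,
    (tendsto_essSup_abs_sub hlim volume (closure Ω)).mono_left nhdsWithin_le_nhds⟩
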